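/- Let 1 ≤ q < ∞ and let b ∈ SV satisfy b(t²) ∼ b(t) on (0,∞), with associated functions B₀ and B∞. Assume there exist real numbers γ < 1/q < δ such that u ↦ u^{−γ}·B₀(u) is almost decreasing on (0,1] and u ↦ u^{−δ}·B∞(u) is almost increasing on (0,1] (i.e. ρ_{B₀} < 1/q < π_{B∞}). Then (∫_t^∞ b(s)^q ds/s)^{1/q} ∼ b(t)·ℓ(t)^{1/q}, with equivalence constants independent of t > 0. -/

import Mathlib

open Set MeasureTheory Real

/-- `f` is almost increasing on `S`: there is `C > 0` with `f s ≤ C * f t` whenever `s ≤ t` in `S`. -/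
def AlmostIncreasingOn (f : ℝ → ℝ) (S : Set ℝ) : Prop :=
  ∃ C > (0:ℝ), ∀ s ∈ S, ∀ t ∈ S, s ≤ t → f s ≤ C * f t

/-- `f` is almost decreasing on `S`: there is `C > 0` with `f t ≤ C * f s` whenever `s ≤ t` in `S`. -/
def AlmostDecreasingOn (f : ℝ → ℝ) (S : Set ℝ) : Prop :=
  ∃ C > (0:ℝ), ∀ s ∈ S, ∀ t ∈ S, s ≤ t → f t ≤ C * f s

/-- A measurable positive function `b` on `(0,∞)` is slowly varying if for every `ε > 0`,
`t ↦ t^ε * b t` is almost increasing and `t ↦ t^(-ε) * b t` is almost decreasing on `(0,∞)`. -/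
def SlowlyVarying (b : ℝ → ℝ) : Prop :=
  Measurable b ∧ (∀ t ∈ Ioi (0:ℝ), 0 < b t) ∧
  ∀ ε > (0:ℝ), AlmostIncreasingOn (fun t => t ^ ε * b t) (Ioi 0) ∧
    AlmostDecreasingOn (fun t => t ^ (-ε) * b t) (Ioi 0)

/-- `f ∼ g` on `S`: there are `c, C > 0` with `c * g x ≤ f x ≤ C * g x` for all `x ∈ S`. -/
def EquivOn (f g : ℝ → ℝ) (S : Set ℝ) : Prop :=
  ∃ c > (0:ℝ), ∃ C > (0:ℝ), ∀ x ∈ S, c * g x ≤ f x ∧ f x ≤ C * g x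

/-- The associated function `B₀(u) = b(e^{1 - 1/u})`. -/
noncomputable def assocB0 (b : ℝ → ℝ) (u : ℝ) : ℝ := b (Real.exp (1 - 1 / u))

/-- The associated function `B∞(u) = b(e^{1/u - 1})`. -/
noncomputable def assocBinf (b : ℝ → ℝ) (u : ℝ) : ℝ := b (Real.exp (1 / u - 1))

/-- `ℓ(t) = 1 + |log t|`. -/
noncomputable def ell (t : ℝ) : ℝ := 1 + |Real.log t|

/-- The sequence `λ_k`: `λ_k = e^{1 - e^{-k}}` for `k ≤ -1` and `λ_k = e^{e^k - 1}` for `k ≥ 0`. -/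
noncomputable def lam (k : ℤ) : ℝ :=
  if k < 0 then Real.exp (1 - Real.exp (-(k : ℝ))) else Real.exp (Real.exp (k : ℝ) - 1)

/-!
Substitute `v = ℓ(s)`. On `[1,∞)` the function `b` becomes `f v = B∞(1/v)` and on `(0,1]` it becomes
`g v = B₀(1/v)`, both with `v ∈ [1,∞)`, and `ds/s` becomes `dv`. The index conditions say that
`v ^ δ * f v` is almost decreasing and `v ^ γ * g v` is almost increasing, so that the upper
bounds reduce to integrals of powers: `v ^ (-δq)` is integrable at infinity and `v ^ (-γq)` at zero.
For the lower bounds, `t ↦ t²` becomes `v ↦ 2v - 1`; the hypothesis on `b(t²)` keeps `f` and `g` from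
degenerating on an interval of length proportional to `ℓ(t)`.
-/

lemma one_le_ell (t : ℝ) : 1 ≤ ell t := le_add_of_nonneg_right (abs_nonneg _)

lemma ell_pos (t : ℝ) : 0 < ell t := zero_lt_one.trans_le (one_le_ell t)

lemma ell_of_one_le {t : ℝ} (ht : 1 ≤ t) : ell t = 1 + log t := by
  rw [ell, abs_of_nonneg (log_nonneg ht)]

lemma ell_of_le_one {t : ℝ} (h0 : 0 < t) (ht : t ≤ 1) : ell t = 1 - log t := by
  rw [ell, abs_of_nonpos (log_nonpos h0.le ht), sub_eq_add_neg]

lemma ell_one : ell 1 = 1 := by rw [ell, log_one, abs_zero, add_zero]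

lemma assocBinf_inv (b : ℝ → ℝ) (v : ℝ) : assocBinf b v⁻¹ = b (exp (v - 1)) := by
  rw [assocBinf, one_div, inv_inv]

lemma assocB0_inv (b : ℝ → ℝ) (v : ℝ) : assocB0 b v⁻¹ = b (exp (1 - v)) := by
  rw [assocB0, one_div, inv_inv]

lemma assocBinf_inv_ell (b : ℝ → ℝ) {t : ℝ} (ht : 1 ≤ t) : assocBinf b (ell t)⁻¹ = b t := by
  rw [assocBinf_inv, ell_of_one_le ht, add_sub_cancel_left, exp_log (zero_lt_one.trans_le ht)]

lemma assocB0_inv_ell (b : ℝ → ℝ) {t : ℝ} (h0 : 0 < t) (ht : t ≤ 1) :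
    assocB0 b (ell t)⁻¹ = b t := by
  rw [assocB0_inv, ell_of_le_one h0 ht, sub_sub_cancel, exp_log h0]

lemma assocBinf_inv_two_mul_sub_one (b : ℝ → ℝ) (v : ℝ) :
    assocBinf b (2 * v - 1)⁻¹ = b (exp (v - 1) ^ 2) := by
  rw [assocBinf_inv, ← exp_nat_mul]
  ring_nf

lemma assocB0_inv_two_mul_sub_one (b : ℝ → ℝ) (v : ℝ) :
    assocB0 b (2 * v - 1)⁻¹ = b (exp (1 - v) ^ 2) := by
  rw [assocB0_inv, ← exp_nat_mul]
  ring_nf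

section AlmostMonotone

variable {f g : ℝ → ℝ} {S T : Set ℝ} {a : ℝ}

lemma AlmostIncreasingOn.comp_antitoneOn (hf : AlmostIncreasingOn f S) (hg : AntitoneOn g T)
    (hgTS : MapsTo g T S) : AlmostDecreasingOn (f ∘ g) T :=
  let ⟨C, hC, h⟩ := hf
  ⟨C, hC, fun _ hs _ ht hst => h _ (hgTS ht) _ (hgTS hs) (hg hs ht hst)⟩

lemma AlmostDecreasingOn.comp_antitoneOn (hf : AlmostDecreasingOn f S) (hg : AntitoneOn g T)
    (hgTS : MapsTo g T S) : AlmostIncreasingOn (f ∘ g) T :=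
  let ⟨C, hC, h⟩ := hf
  ⟨C, hC, fun _ hs _ ht hst => h _ (hgTS ht) _ (hgTS hs) (hg hs ht hst)⟩

lemma antitoneOn_inv_Ici_one : AntitoneOn (fun v : ℝ => v⁻¹) (Ici 1) :=
  antitoneOn_inv_pos.mono fun _ hv => zero_lt_one.trans_le (mem_Ici.1 hv)

lemma mapsTo_inv_Ici_one : MapsTo (fun v : ℝ => v⁻¹) (Ici 1) (Ioc 0 1) := fun _ hv =>
  ⟨inv_pos.2 (zero_lt_one.trans_le hv), inv_le_one_of_one_le₀ hv⟩

lemma AlmostIncreasingOn.rpow_mul_comp_inv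
    (h : AlmostIncreasingOn (fun u => u ^ (-a) * f u) (Ioc 0 1)) :
    AlmostDecreasingOn (fun v => v ^ a * f v⁻¹) (Ici 1) := by
  simpa only [Function.comp_def, rpow_neg_eq_inv_rpow, inv_inv] using
    h.comp_antitoneOn antitoneOn_inv_Ici_one mapsTo_inv_Ici_one

lemma AlmostDecreasingOn.rpow_mul_comp_inv
    (h : AlmostDecreasingOn (fun u => u ^ (-a) * f u) (Ioc 0 1)) :
    AlmostIncreasingOn (fun v => v ^ a * f v⁻¹) (Ici 1) := by
  simpa only [Function.comp_def, rpow_neg_eq_inv_rpow, inv_inv] using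
    h.comp_antitoneOn antitoneOn_inv_Ici_one mapsTo_inv_Ici_one

lemma rpow_le_two_rpow_abs_mul_rpow {x y : ℝ} (hx : 0 < x) (hy : 0 < y) (hxy : x ≤ 2 * y)
    (hyx : y ≤ 2 * x) : x ^ a ≤ 2 ^ |a| * y ^ a := by
  rw [← div_le_iff₀ (rpow_pos_of_pos hy a), ← div_rpow hx.le hy.le]
  rcases le_total 0 a with ha | ha
  · rw [abs_of_nonneg ha]
    exact rpow_le_rpow (by positivity) ((div_le_iff₀ hy).2 hxy) ha
  · rw [abs_of_nonpos ha, ← neg_neg a, rpow_neg_eq_inv_rpow, inv_div, neg_neg]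
    exact rpow_le_rpow (by positivity) ((div_le_iff₀ hx).2 hyx) (neg_nonneg.2 ha)

lemma AlmostDecreasingOn.exists_le_mul_of_le_two_mul
    (h : AlmostDecreasingOn (fun v => v ^ a * f v) S) (hS : S ⊆ Ioi 0) (hf : ∀ v ∈ S, 0 ≤ f v) :
    ∃ C > (0 : ℝ), ∀ y ∈ S, ∀ z ∈ S, y ≤ z → z ≤ 2 * y → f z ≤ C * f y := by
  obtain ⟨C, hC, h⟩ := h
  refine ⟨C * 2 ^ |a|, by positivity, fun y hy z hz hyz hzy => ?_⟩
  have hy0 : 0 < y := hS hy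
  have hz0 : 0 < z := hS hz
  have hfy := hf y hy
  refine le_of_mul_le_mul_left ?_ (rpow_pos_of_pos hz0 a)
  calc z ^ a * f z ≤ C * (y ^ a * f y) := h y hy z hz hyz
    _ ≤ C * (2 ^ |a| * z ^ a * f y) := by
        gcongr
        exact rpow_le_two_rpow_abs_mul_rpow hy0 hz0 (by linarith) hzy
    _ = z ^ a * (C * 2 ^ |a| * f y) := by ring

lemma AlmostIncreasingOn.exists_le_mul_of_le_two_mul
    (h : AlmostIncreasingOn (fun v => v ^ a * f v) S) (hS : S ⊆ Ioi 0) (hf : ∀ v ∈ S, 0 ≤ f v) :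
    ∃ C > (0 : ℝ), ∀ y ∈ S, ∀ z ∈ S, y ≤ z → z ≤ 2 * y → f y ≤ C * f z := by
  obtain ⟨C, hC, h⟩ := h
  refine ⟨C * 2 ^ |a|, by positivity, fun y hy z hz hyz hzy => ?_⟩
  have hy0 : 0 < y := hS hy
  have hz0 : 0 < z := hS hz
  have hfz := hf z hz
  refine le_of_mul_le_mul_left ?_ (rpow_pos_of_pos hy0 a)
  calc y ^ a * f y ≤ C * (z ^ a * f z) := h y hy z hz hyz
    _ ≤ C * (2 ^ |a| * y ^ a * f z) := by
        gcongr
        exact rpow_le_two_rpow_abs_mul_rpow hz0 hy0 hzy (by linarith)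
    _ = y ^ a * (C * 2 ^ |a| * f z) := by ring

end AlmostMonotone

section UpperBounds

variable {f : ℝ → ℝ} {q a r : ℝ}

lemma setLIntegral_Ioi_rpow {p x : ℝ} (hp : p < -1) (hx : 0 < x) :
    ∫⁻ v in Ioi x, ENNReal.ofReal (v ^ p) = ENNReal.ofReal (-x ^ (p + 1) / (p + 1)) := by
  rw [← integral_Ioi_rpow_of_lt hp hx, ofReal_integral_eq_lintegral_ofReal
    (integrableOn_Ioi_rpow_of_lt hp hx)]
  exact ae_restrict_of_forall_mem measurableSet_Ioi fun v hv => rpow_nonneg (hx.trans hv).le p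

lemma setLIntegral_Ioc_zero_rpow {p x : ℝ} (hp : -1 < p) (hx : 0 ≤ x) :
    ∫⁻ v in Ioc 0 x, ENNReal.ofReal (v ^ p) = ENNReal.ofReal (x ^ (p + 1) / (p + 1)) := by
  have hint : ∫ v in Ioc 0 x, v ^ p = x ^ (p + 1) / (p + 1) := by
    rw [← intervalIntegral.integral_of_le hx, integral_rpow (Or.inl hp),
      zero_rpow (by linarith), sub_zero]
  rw [← hint, ofReal_integral_eq_lintegral_ofReal
    ((intervalIntegrable_iff_integrableOn_Ioc_of_le hx).1
      (intervalIntegral.intervalIntegrable_rpow' hp))]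
  exact ae_restrict_of_forall_mem measurableSet_Ioc fun v hv => rpow_nonneg hv.1.le p

lemma setLIntegral_rpow_le_of_rpow_mul_le {C D x : ℝ} {S : Set ℝ} (hq : 0 ≤ q) (hC : 0 ≤ C)
    (hS : MeasurableSet S) (hS0 : S ⊆ Ioi 0) (hf : ∀ v ∈ S, 0 ≤ f v) (hx : 0 < x)
    (hfx : 0 ≤ f x) (hle : ∀ v ∈ S, v ^ a * f v ≤ C * (x ^ a * f x))
    (hint : ∫⁻ v in S, ENNReal.ofReal (v ^ (-(a * q))) ≤
      ENNReal.ofReal (D * x ^ (-(a * q) + 1))) :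
    ∫⁻ v in S, ENNReal.ofReal (f v ^ q) ≤ ENNReal.ofReal (C ^ q * D * (f x ^ q * x)) := by
  set M := C * (x ^ a * f x)
  have hM : 0 ≤ M ^ q := by positivity
  have hpow : ∀ v ∈ S, f v ^ q ≤ M ^ q * v ^ (-(a * q)) := fun v hv => by
    have hv0 : 0 < v := hS0 hv
    have h := rpow_le_rpow (mul_nonneg (rpow_nonneg hv0.le a) (hf v hv)) (hle v hv) hq
    rw [mul_rpow (by positivity) (hf v hv), ← rpow_mul hv0.le] at h
    rwa [rpow_neg hv0.le, ← div_eq_mul_inv, le_div_iff₀' (by positivity)]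
  calc ∫⁻ v in S, ENNReal.ofReal (f v ^ q)
      ≤ ∫⁻ v in S, ENNReal.ofReal (M ^ q) * ENNReal.ofReal (v ^ (-(a * q))) := by
        refine setLIntegral_mono' hS fun v hv => ?_
        rw [← ENNReal.ofReal_mul hM]
        exact ENNReal.ofReal_le_ofReal (hpow v hv)
    _ = ENNReal.ofReal (M ^ q) * ∫⁻ v in S, ENNReal.ofReal (v ^ (-(a * q))) :=
        lintegral_const_mul' _ _ ENNReal.ofReal_ne_top
    _ ≤ ENNReal.ofReal (M ^ q) * ENNReal.ofReal (D * x ^ (-(a * q) + 1)) := by gcongr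
    _ = ENNReal.ofReal (C ^ q * D * (f x ^ q * x)) := by
        rw [← ENNReal.ofReal_mul hM, mul_rpow hC (by positivity), mul_rpow (by positivity) hfx,
          ← rpow_mul hx.le, rpow_add hx, rpow_one, rpow_neg hx.le]
        congr 1
        field_simp

lemma AlmostDecreasingOn.exists_setLIntegral_Ioi_rpow_le
    (h : AlmostDecreasingOn (fun v => v ^ a * f v) (Ici r)) (hr : 0 < r)
    (hf : ∀ v ∈ Ici r, 0 ≤ f v) (hq : 0 ≤ q) (haq : 1 < a * q) :
    ∃ K > (0 : ℝ), ∀ x ≥ r, ∫⁻ v in Ioi x, ENNReal.ofReal (f v ^ q) ≤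
      ENNReal.ofReal (K * (f x ^ q * x)) := by
  obtain ⟨C, hC, h⟩ := h
  have hD : 0 < (a * q - 1)⁻¹ := inv_pos.2 (sub_pos.2 haq)
  refine ⟨C ^ q * (a * q - 1)⁻¹, mul_pos (rpow_pos_of_pos hC q) hD, fun x hx => ?_⟩
  have hx0 : 0 < x := hr.trans_le hx
  have hge : ∀ v ∈ Ioi x, r ≤ v := fun v hv => hx.trans (le_of_lt hv)
  refine setLIntegral_rpow_le_of_rpow_mul_le hq hC.le measurableSet_Ioi (Ioi_subset_Ioi hx0.le)
    (fun v hv => hf v (hge v hv)) hx0 (hf x hx)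
    (fun v hv => h x hx v (hge v hv) (le_of_lt hv)) (le_of_eq ?_)
  rw [setLIntegral_Ioi_rpow (by linarith) hx0, neg_div, ← div_neg, neg_add, neg_neg,
    ← sub_eq_add_neg, div_eq_inv_mul]

lemma AlmostIncreasingOn.exists_setLIntegral_Ico_rpow_le
    (h : AlmostIncreasingOn (fun v => v ^ a * f v) (Ici r)) (hr : 0 < r)
    (hf : ∀ v ∈ Ici r, 0 ≤ f v) (hq : 0 ≤ q) (haq : a * q < 1) :
    ∃ K > (0 : ℝ), ∀ x ≥ r, ∫⁻ v in Ico r x, ENNReal.ofReal (f v ^ q) ≤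
      ENNReal.ofReal (K * (f x ^ q * x)) := by
  obtain ⟨C, hC, h⟩ := h
  have hD : 0 < (-(a * q) + 1)⁻¹ := inv_pos.2 (by linarith)
  refine ⟨C ^ q * (-(a * q) + 1)⁻¹, mul_pos (rpow_pos_of_pos hC q) hD, fun x hx => ?_⟩
  have hx0 : 0 < x := hr.trans_le hx
  have hsub : Ico r x ⊆ Ioc 0 x := fun v hv => ⟨hr.trans_le hv.1, hv.2.le⟩
  refine setLIntegral_rpow_le_of_rpow_mul_le hq hC.le measurableSet_Ico
    (hsub.trans Ioc_subset_Ioi_self) (fun v hv => hf v hv.1) hx0 (hf x hx)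
    (fun v hv => h v hv.1 x hx hv.2.le) ((lintegral_mono_set hsub).trans_eq ?_)
  rw [setLIntegral_Ioc_zero_rpow (by linarith) hx0.le, div_eq_inv_mul]

lemma AlmostIncreasingOn.exists_rpow_one_le
    (h : AlmostIncreasingOn (fun v => v ^ a * f v) (Ici 1)) (hf : ∀ v ∈ Ici 1, 0 ≤ f v)
    (hq : 0 ≤ q) (haq : a * q ≤ 1) :
    ∃ K > (0 : ℝ), ∀ x ≥ 1, f 1 ^ q ≤ K * (f x ^ q * x) := by
  obtain ⟨C, hC, h⟩ := h
  refine ⟨C ^ q, by positivity, fun x hx => ?_⟩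
  have hx0 : 0 < x := zero_lt_one.trans_le hx
  have hfx := hf x hx
  have h1 : f 1 ≤ C * (x ^ a * f x) := by simpa using h 1 self_mem_Ici x hx hx
  calc f 1 ^ q ≤ (C * (x ^ a * f x)) ^ q := rpow_le_rpow (hf 1 self_mem_Ici) h1 hq
    _ = C ^ q * (f x ^ q * x ^ (a * q)) := by
        rw [mul_rpow hC.le (by positivity), mul_rpow (by positivity) hfx, ← rpow_mul hx0.le,
          mul_comm (f x ^ q)]
    _ ≤ C ^ q * (f x ^ q * x) := by
        gcongr
        simpa using rpow_le_rpow_of_exponent_le hx haq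

end UpperBounds

section LowerBounds

variable {f : ℝ → ℝ} {q a C : ℝ}

lemma ofReal_rpow_mul_volume_le_setLIntegral {m : ℝ} {S : Set ℝ} (hq : 0 ≤ q) (hm : 0 ≤ m)
    (hS : MeasurableSet S) (hle : ∀ v ∈ S, m ≤ f v) :
    ENNReal.ofReal (m ^ q) * volume S ≤ ∫⁻ v in S, ENNReal.ofReal (f v ^ q) := by
  rw [← setLIntegral_const]
  exact setLIntegral_mono' hS fun v hv => ENNReal.ofReal_le_ofReal (rpow_le_rpow hm (hle v hv) hq)

lemma ofReal_mul_rpow_mul_le_setLIntegral {κ x : ℝ} {S : Set ℝ} (hq : 0 ≤ q) (hC : 0 < C)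
    (hfx : 0 ≤ f x) (hS : MeasurableSet S) (hle : ∀ v ∈ S, f x ≤ C * f v)
    (hvol : ENNReal.ofReal (κ * x) ≤ volume S) :
    ENNReal.ofReal (C⁻¹ ^ q * κ * (f x ^ q * x)) ≤ ∫⁻ v in S, ENNReal.ofReal (f v ^ q) := by
  calc ENNReal.ofReal (C⁻¹ ^ q * κ * (f x ^ q * x))
      = ENNReal.ofReal ((C⁻¹ * f x) ^ q) * ENNReal.ofReal (κ * x) := by
        rw [← ENNReal.ofReal_mul (by positivity), mul_rpow (by positivity) hfx]
        ring_nf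
    _ ≤ ENNReal.ofReal ((C⁻¹ * f x) ^ q) * volume S := by gcongr
    _ ≤ ∫⁻ v in S, ENNReal.ofReal (f v ^ q) :=
        ofReal_rpow_mul_volume_le_setLIntegral hq (by positivity) hS fun v hv =>
          (inv_mul_le_iff₀ hC).2 (hle v hv)

lemma Ici_one_subset_Ioi_zero : Ici (1 : ℝ) ⊆ Ioi 0 := Ici_subset_Ioi.2 zero_lt_one

-- The map `v ↦ 2 * v - 1` fixes `1`, so the doubling hypothesis is only effective away from `1`;
-- near `1` the function is bounded above and below by positive constants.
lemma AlmostDecreasingOn.exists_le_mul_of_mem_Ioc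
    (h : AlmostDecreasingOn (fun v => v ^ a * f v) (Ici 1)) (hf : ∀ v ∈ Ici 1, 0 < f v)
    (hC : 0 < C) (hdouble : ∀ v ≥ 1, f v ≤ C * f (2 * v - 1)) :
    ∃ K > (0 : ℝ), ∀ x ≥ 1, ∀ v ∈ Ioc x (4 / 3 * x), f x ≤ K * f v := by
  obtain ⟨D, hD, hloc⟩ := h.exists_le_mul_of_le_two_mul Ici_one_subset_Ioi_zero
    fun v hv => (hf v hv).le
  simp only [mem_Ici] at hf hloc
  have hf1 := hf 1 le_rfl
  have hf2 := hf 2 one_le_two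
  refine ⟨D * f 1 / f 2 * D + C * D, by positivity, fun x hx v hv => ?_⟩
  have hv1 : 1 ≤ v := hx.trans hv.1.le
  have hfv := hf v hv1
  rw [add_mul]
  rcases le_total x (3 / 2) with hx2 | hx2
  · have hfx : f x ≤ D * f 1 := hloc 1 le_rfl x hx hx (by linarith)
    have hf2v : f 2 ≤ D * f v := hloc v hv1 2 one_le_two (by linarith [hv.2]) (by linarith)
    refine le_add_of_le_of_nonneg ?_ (by positivity)
    calc f x ≤ D * f 1 / f 2 * f 2 := by rwa [div_mul_cancel₀ _ hf2.ne']
      _ ≤ D * f 1 / f 2 * (D * f v) := by gcongr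
      _ = D * f 1 / f 2 * D * f v := by ring
  · have hloc' : f (2 * x - 1) ≤ D * f v :=
      hloc v hv1 _ (by linarith) (by linarith [hv.2]) (by linarith [hv.1])
    refine le_add_of_nonneg_of_le (by positivity) ?_
    calc f x ≤ C * f (2 * x - 1) := hdouble x hx
      _ ≤ C * (D * f v) := by gcongr
      _ = C * D * f v := by ring

lemma AlmostDecreasingOn.exists_le_setLIntegral_Ioi_rpow
    (h : AlmostDecreasingOn (fun v => v ^ a * f v) (Ici 1)) (hf : ∀ v ∈ Ici 1, 0 < f v)
    (hC : 0 < C) (hdouble : ∀ v ≥ 1, f v ≤ C * f (2 * v - 1)) (hq : 0 ≤ q) :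
    ∃ k > (0 : ℝ), ∀ x ≥ 1, ENNReal.ofReal (k * (f x ^ q * x)) ≤
      ∫⁻ v in Ioi x, ENNReal.ofReal (f v ^ q) := by
  obtain ⟨K, hK, hle⟩ := h.exists_le_mul_of_mem_Ioc hf hC hdouble
  refine ⟨K⁻¹ ^ q * (1 / 3), by positivity, fun x hx => ?_⟩
  refine (ofReal_mul_rpow_mul_le_setLIntegral hq hK (hf x hx).le measurableSet_Ioc
    (hle x hx) ?_).trans (lintegral_mono_set Ioc_subset_Ioi_self)
  rw [volume_Ioc]
  ring_nf
  exact le_rfl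

lemma AlmostIncreasingOn.exists_le_setLIntegral_Ico_rpow
    (h : AlmostIncreasingOn (fun v => v ^ a * f v) (Ici 1)) (hf : ∀ v ∈ Ici 1, 0 ≤ f v)
    (hC : 0 < C) (hdouble : ∀ v ≥ 1, f (2 * v - 1) ≤ C * f v) (hq : 0 ≤ q) :
    ∃ k > (0 : ℝ), ∀ x ≥ 2, ENNReal.ofReal (k * (f x ^ q * x)) ≤
      ∫⁻ v in Ico 1 x, ENNReal.ofReal (f v ^ q) := by
  obtain ⟨D, hD, hloc⟩ := h.exists_le_mul_of_le_two_mul Ici_one_subset_Ioi_zero hf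
  refine ⟨(C * D)⁻¹ ^ q * (1 / 4), by positivity, fun x (hx : 2 ≤ x) => ?_⟩
  set y := (x + 1) / 2
  have hxy : 2 * y - 1 = x := by ring
  have hy : 1 ≤ y := by linarith
  have hle : ∀ v ∈ Ico y x, f x ≤ C * D * f v := fun v hv => by
    calc f x ≤ C * f y := hxy ▸ hdouble y hy
      _ ≤ C * (D * f v) := by
          gcongr
          exact hloc y hy v (hy.trans hv.1) hv.1 (by linarith [hv.2])
      _ = C * D * f v := by ring
  refine (ofReal_mul_rpow_mul_le_setLIntegral hq (by positivity)
    (hf x (one_le_two.trans hx)) measurableSet_Ico hle ?_).trans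
    (lintegral_mono_set (Ico_subset_Ico_left hy))
  rw [volume_Ico]
  exact ENNReal.ofReal_le_ofReal (by linarith)

lemma AlmostIncreasingOn.exists_rpow_mul_le_of_le_two
    (h : AlmostIncreasingOn (fun v => v ^ a * f v) (Ici 1)) (hf : ∀ v ∈ Ici 1, 0 < f v)
    (hq : 0 ≤ q) :
    ∃ K > (0 : ℝ), ∀ x ≥ 1, x ≤ 2 → f x ^ q * x ≤ K := by
  obtain ⟨D, hD, hloc⟩ := h.exists_le_mul_of_le_two_mul Ici_one_subset_Ioi_zero
    fun v hv => (hf v hv).le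
  have hf2 := hf 2 (mem_Ici.2 one_le_two)
  refine ⟨(D * f 2) ^ q * 2, by positivity, fun x (hx : 1 ≤ x) hx2 => ?_⟩
  have hfx := hf x hx
  gcongr
  exact hloc x hx 2 (mem_Ici.2 one_le_two) hx2 (by linarith)

end LowerBounds

section ChangeOfVariables

lemma setLIntegral_image_exp_comp_div {g g' : ℝ → ℝ} {S : Set ℝ} (hS : MeasurableSet S)
    (hg : ∀ v ∈ S, HasDerivWithinAt g (g' v) S v) (hg' : ∀ v ∈ S, |g' v| = 1)
    (hinj : InjOn g S) (f : ℝ → ℝ) :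
    ∫⁻ s in (fun v => exp (g v)) '' S, ENNReal.ofReal (f s / s) =
      ∫⁻ v in S, ENNReal.ofReal (f (exp (g v))) := by
  rw [lintegral_image_eq_lintegral_abs_deriv_mul hS (fun v hv => (hg v hv).exp)
    (exp_injective.injOn.comp hinj (mapsTo_univ g S))]
  refine setLIntegral_congr_fun hS fun v hv => ?_
  simp only [abs_mul, abs_exp, hg' v hv, mul_one]
  rw [← ENNReal.ofReal_mul (exp_pos _).le, mul_div_cancel₀ _ (exp_pos _).ne']

lemma setLIntegral_Ioi_rpow_div_eq (b : ℝ → ℝ) (q : ℝ) {t : ℝ} (ht : 1 ≤ t) :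
    ∫⁻ s in Ioi t, ENNReal.ofReal (b s ^ q / s) =
      ∫⁻ v in Ioi (ell t), ENNReal.ofReal (assocBinf b v⁻¹ ^ q) := by
  have ht0 : 0 < t := zero_lt_one.trans_le ht
  have himage : (fun v => exp (v - 1)) '' Ioi (ell t) = Ioi t := by
    rw [ell_of_one_le ht]
    ext s
    constructor
    · rintro ⟨v, hv, rfl⟩
      exact (log_lt_iff_lt_exp ht0).1 (lt_sub_iff_add_lt'.2 hv)
    · exact fun hs => ⟨1 + log s, add_lt_add_right (log_lt_log ht0 hs) 1, by
        simp only [add_sub_cancel_left, exp_log (ht0.trans hs)]⟩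
  simp only [assocBinf_inv]
  rw [← himage]
  exact setLIntegral_image_exp_comp_div (f := fun s => b s ^ q) measurableSet_Ioi
    (fun v _ => ((hasDerivAt_id' v).sub_const 1).hasDerivWithinAt) (fun _ _ => abs_one)
    (sub_left_injective).injOn

lemma setLIntegral_Ioc_one_rpow_div_eq (b : ℝ → ℝ) (q : ℝ) {t : ℝ} (h0 : 0 < t) (ht : t ≤ 1) :
    ∫⁻ s in Ioc t 1, ENNReal.ofReal (b s ^ q / s) =
      ∫⁻ v in Ico 1 (ell t), ENNReal.ofReal (assocB0 b v⁻¹ ^ q) := by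
  have himage : (fun v => exp (1 - v)) '' Ico 1 (ell t) = Ioc t 1 := by
    rw [ell_of_le_one h0 ht]
    ext s
    constructor
    · rintro ⟨v, hv, rfl⟩
      exact ⟨(log_lt_iff_lt_exp h0).1 (by linarith [hv.2]), exp_le_one_iff.2 (sub_nonpos.2 hv.1)⟩
    · intro hs
      have hs0 : 0 < s := h0.trans hs.1
      refine ⟨1 - log s, ⟨?_, sub_lt_sub_left (log_lt_log h0 hs.1) 1⟩, ?_⟩
      · exact le_sub_self_iff 1 |>.2 (log_nonpos hs0.le hs.2)
      · simp only [sub_sub_cancel, exp_log hs0]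
  simp only [assocB0_inv]
  rw [← himage]
  exact setLIntegral_image_exp_comp_div (f := fun s => b s ^ q) measurableSet_Ico
    (fun v _ => ((hasDerivAt_id' v).const_sub 1).hasDerivWithinAt)
    (fun _ _ => by rw [abs_neg, abs_one]) (sub_right_injective).injOn

end ChangeOfVariables

section TwoSidedBounds

variable {b : ℝ → ℝ} {q γ δ : ℝ}

lemma assocBinf_inv_pos (hb : ∀ t ∈ Ioi (0 : ℝ), 0 < b t) (v : ℝ) : 0 < assocBinf b v⁻¹ :=
  hb _ (exp_pos _)

lemma assocB0_inv_pos (hb : ∀ t ∈ Ioi (0 : ℝ), 0 < b t) (v : ℝ) : 0 < assocB0 b v⁻¹ :=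
  hb _ (exp_pos _)

lemma exists_setLIntegral_Ioi_rpow_div_le_of_one_le (hb : ∀ t ∈ Ioi (0 : ℝ), 0 < b t)
    (hq : 0 < q) (hδ : 1 / q < δ)
    (hBinf : AlmostIncreasingOn (fun u => u ^ (-δ) * assocBinf b u) (Ioc 0 1)) :
    ∃ K > (0 : ℝ), ∀ t ≥ (1 : ℝ), ∫⁻ s in Ioi t, ENNReal.ofReal (b s ^ q / s) ≤
      ENNReal.ofReal (K * (b t ^ q * ell t)) := by
  obtain ⟨K, hK, h⟩ := hBinf.rpow_mul_comp_inv.exists_setLIntegral_Ioi_rpow_le one_pos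
    (fun v _ => (assocBinf_inv_pos hb v).le) hq.le ((div_lt_iff₀ hq).1 hδ)
  refine ⟨K, hK, fun t ht => ?_⟩
  simpa only [setLIntegral_Ioi_rpow_div_eq b q ht, assocBinf_inv_ell b ht] using
    h (ell t) (one_le_ell t)

lemma exists_setLIntegral_Ioc_one_rpow_div_le (hb : ∀ t ∈ Ioi (0 : ℝ), 0 < b t)
    (hq : 0 < q) (hγ : γ < 1 / q)
    (hB0 : AlmostDecreasingOn (fun u => u ^ (-γ) * assocB0 b u) (Ioc 0 1)) :
    ∃ K > (0 : ℝ), ∀ t ∈ Ioc (0 : ℝ) 1, ∫⁻ s in Ioc t 1, ENNReal.ofReal (b s ^ q / s) ≤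
      ENNReal.ofReal (K * (b t ^ q * ell t)) := by
  obtain ⟨K, hK, h⟩ := hB0.rpow_mul_comp_inv.exists_setLIntegral_Ico_rpow_le one_pos
    (fun v _ => (assocB0_inv_pos hb v).le) hq.le ((lt_div_iff₀ hq).1 hγ)
  refine ⟨K, hK, fun t ht => ?_⟩
  simpa only [setLIntegral_Ioc_one_rpow_div_eq b q ht.1 ht.2, assocB0_inv_ell b ht.1 ht.2] using
    h (ell t) (one_le_ell t)

lemma exists_rpow_one_le_mul_rpow_mul_ell (hb : ∀ t ∈ Ioi (0 : ℝ), 0 < b t) (hq : 0 < q)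
    (hγ : γ ≤ 1 / q) (hB0 : AlmostDecreasingOn (fun u => u ^ (-γ) * assocB0 b u) (Ioc 0 1)) :
    ∃ K > (0 : ℝ), ∀ t ∈ Ioc (0 : ℝ) 1, b 1 ^ q ≤ K * (b t ^ q * ell t) := by
  obtain ⟨K, hK, h⟩ := hB0.rpow_mul_comp_inv.exists_rpow_one_le
    (fun v _ => (assocB0_inv_pos hb v).le) hq.le ((le_div_iff₀ hq).1 hγ)
  refine ⟨K, hK, fun t ht => ?_⟩
  have hb1 : assocB0 b 1⁻¹ = b 1 := by simpa only [ell_one] using assocB0_inv_ell b one_pos le_rfl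
  simpa only [assocB0_inv_ell b ht.1 ht.2, hb1] using h (ell t) (one_le_ell t)

lemma exists_setLIntegral_Ioi_rpow_div_le (hb : ∀ t ∈ Ioi (0 : ℝ), 0 < b t) (hq : 0 < q)
    (hγ : γ < 1 / q) (hδ : 1 / q < δ)
    (hB0 : AlmostDecreasingOn (fun u => u ^ (-γ) * assocB0 b u) (Ioc 0 1))
    (hBinf : AlmostIncreasingOn (fun u => u ^ (-δ) * assocBinf b u) (Ioc 0 1)) :
    ∃ K > (0 : ℝ), ∀ t > (0 : ℝ), ∫⁻ s in Ioi t, ENNReal.ofReal (b s ^ q / s) ≤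
      ENNReal.ofReal (K * (b t ^ q * ell t)) := by
  obtain ⟨K₁, hK₁, large⟩ := exists_setLIntegral_Ioi_rpow_div_le_of_one_le hb hq hδ hBinf
  obtain ⟨K₀, hK₀, small⟩ := exists_setLIntegral_Ioc_one_rpow_div_le hb hq hγ hB0
  obtain ⟨L, hL, hone⟩ := exists_rpow_one_le_mul_rpow_mul_ell hb hq hγ.le hB0
  refine ⟨K₀ + K₁ * L + K₁, by positivity, fun t ht => ?_⟩
  have hX : 0 < b t ^ q * ell t := mul_pos (rpow_pos_of_pos (hb t ht) q) (ell_pos t)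
  rcases le_total 1 t with h1 | h1
  · refine (large t h1).trans (ENNReal.ofReal_le_ofReal ?_)
    gcongr
    exact le_add_of_nonneg_left (by positivity)
  · calc ∫⁻ s in Ioi t, ENNReal.ofReal (b s ^ q / s)
        ≤ (∫⁻ s in Ioc t 1, ENNReal.ofReal (b s ^ q / s)) +
            ∫⁻ s in Ioi 1, ENNReal.ofReal (b s ^ q / s) := by
          rw [← Ioc_union_Ioi_eq_Ioi h1]
          exact lintegral_union_le _ _ _
      _ ≤ ENNReal.ofReal (K₀ * (b t ^ q * ell t)) + ENNReal.ofReal (K₁ * b 1 ^ q) :=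
          add_le_add (small t ⟨ht, h1⟩) (by simpa only [ell_one, mul_one] using large 1 le_rfl)
      _ ≤ ENNReal.ofReal (K₀ * (b t ^ q * ell t)) +
            ENNReal.ofReal (K₁ * (L * (b t ^ q * ell t))) := by
          gcongr
          exact hone t ⟨ht, h1⟩
      _ = ENNReal.ofReal ((K₀ + K₁ * L) * (b t ^ q * ell t)) := by
          rw [← ENNReal.ofReal_add (by positivity) (by positivity), ← mul_assoc K₁, ← add_mul]
      _ ≤ ENNReal.ofReal ((K₀ + K₁ * L + K₁) * (b t ^ q * ell t)) := by
          gcongr ENNReal.ofReal (?_ * _)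
          exact le_add_of_nonneg_right hK₁.le

lemma exists_le_setLIntegral_Ioi_rpow_div_of_one_le (hb : ∀ t ∈ Ioi (0 : ℝ), 0 < b t)
    (hsq : EquivOn (fun t => b (t ^ 2)) b (Ioi 0)) (hq : 0 ≤ q)
    (hBinf : AlmostIncreasingOn (fun u => u ^ (-δ) * assocBinf b u) (Ioc 0 1)) :
    ∃ k > (0 : ℝ), ∀ t ≥ (1 : ℝ), ENNReal.ofReal (k * (b t ^ q * ell t)) ≤
      ∫⁻ s in Ioi t, ENNReal.ofReal (b s ^ q / s) := by
  obtain ⟨c, hc, _, _, hsq⟩ := hsq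
  have hdouble : ∀ v ≥ (1 : ℝ), assocBinf b v⁻¹ ≤ c⁻¹ * assocBinf b (2 * v - 1)⁻¹ := fun v _ => by
    rw [assocBinf_inv_two_mul_sub_one, assocBinf_inv, le_inv_mul_iff₀ hc]
    exact (hsq _ (exp_pos _)).1
  obtain ⟨k, hk, h⟩ := hBinf.rpow_mul_comp_inv.exists_le_setLIntegral_Ioi_rpow
    (fun v _ => assocBinf_inv_pos hb v) (inv_pos.2 hc) hdouble hq
  refine ⟨k, hk, fun t ht => ?_⟩
  simpa only [setLIntegral_Ioi_rpow_div_eq b q ht, assocBinf_inv_ell b ht] using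
    h (ell t) (one_le_ell t)

lemma exists_le_setLIntegral_Ioc_one_rpow_div (hb : ∀ t ∈ Ioi (0 : ℝ), 0 < b t)
    (hsq : EquivOn (fun t => b (t ^ 2)) b (Ioi 0)) (hq : 0 ≤ q)
    (hB0 : AlmostDecreasingOn (fun u => u ^ (-γ) * assocB0 b u) (Ioc 0 1)) :
    ∃ k > (0 : ℝ), ∀ t ∈ Ioc (0 : ℝ) 1, 2 ≤ ell t → ENNReal.ofReal (k * (b t ^ q * ell t)) ≤
      ∫⁻ s in Ioc t 1, ENNReal.ofReal (b s ^ q / s) := by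
  obtain ⟨_, _, C, hC, hsq⟩ := hsq
  have hdouble : ∀ v ≥ (1 : ℝ), assocB0 b (2 * v - 1)⁻¹ ≤ C * assocB0 b v⁻¹ := fun v _ => by
    rw [assocB0_inv_two_mul_sub_one, assocB0_inv]
    exact (hsq _ (exp_pos _)).2
  obtain ⟨k, hk, h⟩ := hB0.rpow_mul_comp_inv.exists_le_setLIntegral_Ico_rpow
    (fun v _ => (assocB0_inv_pos hb v).le) hC hdouble hq
  refine ⟨k, hk, fun t ht h2 => ?_⟩
  simpa only [setLIntegral_Ioc_one_rpow_div_eq b q ht.1 ht.2, assocB0_inv_ell b ht.1 ht.2] using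
    h (ell t) h2

lemma exists_rpow_mul_ell_le_of_ell_le_two (hb : ∀ t ∈ Ioi (0 : ℝ), 0 < b t) (hq : 0 ≤ q)
    (hB0 : AlmostDecreasingOn (fun u => u ^ (-γ) * assocB0 b u) (Ioc 0 1)) :
    ∃ K > (0 : ℝ), ∀ t ∈ Ioc (0 : ℝ) 1, ell t ≤ 2 → b t ^ q * ell t ≤ K := by
  obtain ⟨K, hK, h⟩ := hB0.rpow_mul_comp_inv.exists_rpow_mul_le_of_le_two
    (fun v _ => assocB0_inv_pos hb v) hq
  refine ⟨K, hK, fun t ht h2 => ?_⟩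
  simpa only [assocB0_inv_ell b ht.1 ht.2] using h (ell t) (one_le_ell t) h2

lemma exists_le_setLIntegral_Ioi_rpow_div (hb : ∀ t ∈ Ioi (0 : ℝ), 0 < b t)
    (hsq : EquivOn (fun t => b (t ^ 2)) b (Ioi 0)) (hq : 0 ≤ q)
    (hB0 : AlmostDecreasingOn (fun u => u ^ (-γ) * assocB0 b u) (Ioc 0 1))
    (hBinf : AlmostIncreasingOn (fun u => u ^ (-δ) * assocBinf b u) (Ioc 0 1)) :
    ∃ k > (0 : ℝ), ∀ t > (0 : ℝ), ENNReal.ofReal (k * (b t ^ q * ell t)) ≤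
      ∫⁻ s in Ioi t, ENNReal.ofReal (b s ^ q / s) := by
  obtain ⟨k₁, hk₁, large⟩ := exists_le_setLIntegral_Ioi_rpow_div_of_one_le hb hsq hq hBinf
  obtain ⟨k₀, hk₀, small⟩ := exists_le_setLIntegral_Ioc_one_rpow_div hb hsq hq hB0
  obtain ⟨K, hK, near⟩ := exists_rpow_mul_ell_le_of_ell_le_two hb hq hB0
  set m := k₁ * b 1 ^ q
  have hm : 0 < m := mul_pos hk₁ (rpow_pos_of_pos (hb 1 (mem_Ioi.2 one_pos)) q)
  refine ⟨min k₁ (min k₀ (m / K)), by positivity, fun t ht => ?_⟩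
  have hX : 0 < b t ^ q * ell t := mul_pos (rpow_pos_of_pos (hb t ht) q) (ell_pos t)
  rcases le_total 1 t with h1 | h1
  · refine le_trans ?_ (large t h1)
    gcongr
    exact min_le_left _ _
  rcases le_total 2 (ell t) with h2 | h2
  · calc ENNReal.ofReal (min k₁ (min k₀ (m / K)) * (b t ^ q * ell t))
        ≤ ENNReal.ofReal (k₀ * (b t ^ q * ell t)) := by
          gcongr
          exact (min_le_right _ _).trans (min_le_left _ _)
      _ ≤ ∫⁻ s in Ioc t 1, ENNReal.ofReal (b s ^ q / s) := small t ⟨ht, h1⟩ h2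
      _ ≤ ∫⁻ s in Ioi t, ENNReal.ofReal (b s ^ q / s) := lintegral_mono_set Ioc_subset_Ioi_self
  · calc ENNReal.ofReal (min k₁ (min k₀ (m / K)) * (b t ^ q * ell t))
        ≤ ENNReal.ofReal (m / K * K) := by
          gcongr
          · exact (min_le_right _ _).trans (min_le_right _ _)
          · exact near t ⟨ht, h1⟩ h2
      _ = ENNReal.ofReal m := by rw [div_mul_cancel₀ _ hK.ne']
      _ ≤ ∫⁻ s in Ioi 1, ENNReal.ofReal (b s ^ q / s) := by
          simpa only [ell_one, mul_one] using large 1 le_rfl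
      _ ≤ ∫⁻ s in Ioi t, ENNReal.ofReal (b s ^ q / s) := lintegral_mono_set (Ioi_subset_Ioi h1)

end TwoSidedBounds

lemma ofReal_mul_rpow_mul_rpow_one_div {K x y q : ℝ} (hq : 0 < q) (hK : 0 ≤ K) (hx : 0 ≤ x)
    (hy : 0 ≤ y) : ENNReal.ofReal (K * (x ^ q * y)) ^ (1 / q) =
      ENNReal.ofReal (K ^ (1 / q) * (x * y ^ (1 / q))) := by
  rw [ENNReal.ofReal_rpow_of_nonneg (by positivity) (by positivity),
    mul_rpow hK (by positivity), mul_rpow (by positivity) hy, ← rpow_mul hx,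
    mul_one_div_cancel hq.ne', rpow_one]

theorem limiting_Lq_norm_near_infty_general (q : ℝ) (hq : 0 < q) (b : ℝ → ℝ)
    (hb : ∀ t ∈ Ioi (0 : ℝ), 0 < b t) (hsq : EquivOn (fun t => b (t ^ 2)) b (Ioi 0))
    (γ δ : ℝ) (hγ : γ < 1 / q) (hδ : 1 / q < δ)
    (hB0 : AlmostDecreasingOn (fun u => u ^ (-γ) * assocB0 b u) (Ioc 0 1))
    (hBinf : AlmostIncreasingOn (fun u => u ^ (-δ) * assocBinf b u) (Ioc 0 1)) :
    ∃ c > (0 : ℝ), ∃ C > (0 : ℝ), ∀ t > (0 : ℝ),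
      ENNReal.ofReal (c * (b t * ell t ^ (1 / q)))
          ≤ (∫⁻ s in Ioi t, ENNReal.ofReal (b s ^ q / s)) ^ (1 / q) ∧
      (∫⁻ s in Ioi t, ENNReal.ofReal (b s ^ q / s)) ^ (1 / q)
          ≤ ENNReal.ofReal (C * (b t * ell t ^ (1 / q))) := by
  obtain ⟨K, hK, hupper⟩ := exists_setLIntegral_Ioi_rpow_div_le hb hq hγ hδ hB0 hBinf
  obtain ⟨k, hk, hlower⟩ := exists_le_setLIntegral_Ioi_rpow_div hb hsq hq.le hB0 hBinf
  refine ⟨k ^ (1 / q), by positivity, K ^ (1 / q), by positivity, fun t ht => ?_⟩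
  have hbt := (hb t ht).le
  have hlt := (ell_pos t).le
  rw [← ofReal_mul_rpow_mul_rpow_one_div hq hk.le hbt hlt,
    ← ofReal_mul_rpow_mul_rpow_one_div hq hK.le hbt hlt]
  exact ⟨ENNReal.rpow_le_rpow (hlower t ht) (by positivity),
    ENNReal.rpow_le_rpow (hupper t ht) (by positivity)⟩

theorem limiting_Lq_norm_near_infty (q : ℝ) (hq : 1 ≤ q) (b : ℝ → ℝ)
    (hb : SlowlyVarying b) (hsq : EquivOn (fun t => b (t ^ 2)) b (Ioi 0))
    (γ δ : ℝ) (hγ : γ < 1 / q) (hδ : 1 / q < δ)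
    (hB0 : AlmostDecreasingOn (fun u => u ^ (-γ) * assocB0 b u) (Ioc 0 1))
    (hBinf : AlmostIncreasingOn (fun u => u ^ (-δ) * assocBinf b u) (Ioc 0 1)) :
    ∃ c > (0:ℝ), ∃ C > (0:ℝ), ∀ t > (0:ℝ),
      ENNReal.ofReal (c * (b t * ell t ^ (1 / q)))
          ≤ (∫⁻ s in Ioi t, ENNReal.ofReal (b s ^ q / s)) ^ (1 / q) ∧
      (∫⁻ s in Ioi t, ENNReal.ofReal (b s ^ q / s)) ^ (1 / q)
          ≤ ENNReal.ofReal (C * (b t * ell t ^ (1 / q))) := by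
  exact limiting_Lq_norm_near_infty_general q (zero_lt_one.trans_le hq) b hb.2.1 hsq γ δ hγ hδ
    hB0 hBinf
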